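/- arXiv:1112.4541 — 2 statements merged into one kernel-verified Lean document; each statement's English description precedes it below -/
import Mathlib

section
/- With the same RIFS setup and a doubling gauge $G$: if $\sup_{u \in \Omega} \mathcal{P}^G(F_u) = \infty$, then the set $\{\omega \in \Omega : \mathcal{P}^G(F_\omega) = \infty\}$ is residual in $(\Omega, d_\Omega)$. -/
open Metric MeasureTheory Filter Set
open scoped ENNReal NNReal

/-- A gauge function: continuous, monotone increasing and positive on `(0,∞)`,
with `G(t) → 0` as `t → 0⁺`. -/
def IsGauge (G : ℝ → ℝ) : Prop :=
  ContinuousOn G (Set.Ioi 0) ∧ MonotoneOn G (Set.Ioi 0) ∧ (∀ t, 0 < t → 0 < G t) ∧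
    Filter.Tendsto G (nhdsWithin 0 (Set.Ioi 0)) (nhds 0)

def gaugeRatioSet (G : ℝ → ℝ) (c : ℝ) : Set ℝ := {r | ∃ t, 0 < t ∧ r = G (c * t) / G t}

/-- `D⁻(G,c) = inf_{t>0} G(ct)/G(t)`. -/
noncomputable def Dminus (G : ℝ → ℝ) (c : ℝ) : ℝ := sInf (gaugeRatioSet G c)

/-- `D⁺(G,c) = sup_{t>0} G(ct)/G(t)`. -/
noncomputable def Dplus (G : ℝ → ℝ) (c : ℝ) : ℝ := sSup (gaugeRatioSet G c)

/-- `G` is doubling: for some `c > 0`, `0 < D⁻(G,c)` and `D⁺(G,c) < ∞`. -/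
def DoublingGauge (G : ℝ → ℝ) : Prop :=
  ∃ c, 0 < c ∧ 0 < Dminus G c ∧ BddAbove (gaugeRatioSet G c)

/-- Packing pre-measure with respect to the gauge `G` (applied to the diameters `2r`
of the balls of a countable centred `δ`-packing), as `δ → 0`. -/
noncomputable def packingPre {K : Type*} [MetricSpace K] (G : ℝ → ℝ) (F : Set K) : ℝ≥0∞ :=
  ⨅ (δ : ℝ) (_ : 0 < δ),
    ⨆ (s : Set ℕ) (c : ℕ → K) (r : ℕ → ℝ)
      (_ : ∀ n ∈ s, c n ∈ F ∧ 0 < r n ∧ 2 * r n ≤ δ)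
      (_ : s.PairwiseDisjoint fun n => Metric.closedBall (c n) (r n)),
      ∑' n : s, ENNReal.ofReal (G (2 * r n))

/-- Packing measure with respect to the gauge `G`. -/
noncomputable def packingMeasure {K : Type*} [MetricSpace K] (G : ℝ → ℝ) (F : Set K) : ℝ≥0∞ :=
  ⨅ (E : ℕ → Set K) (_ : F ⊆ ⋃ n, E n), ∑' n, packingPre G (E n)

/-- Packing dimension, defined from the packing measures `𝒫^s`. -/
noncomputable def packingDim {K : Type*} [MetricSpace K] (F : Set K) : ℝ≥0∞ :=
  ⨆ (s : ℝ) (_ : 0 ≤ s) (_ : packingMeasure (fun t => t ^ s) F = ⊤), ENNReal.ofReal s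

/-- The level-`k` approximation of the random attractor: the union over all length-`k`
words `(i₁,…,i_k)` with `i_l ∈ 𝓘_{ω_l}` of `S_{ω₁,i₁} ∘ ⋯ ∘ S_{ω_k,i_k}(K₀)`. -/
def levelSets {X : Type*} {N : ℕ} (m : Fin N → ℕ) (S : ∀ i, Fin (m i) → X → X) (K₀ : Set X) :
    (ℕ → Fin N) → ℕ → Set X
  | _, 0 => K₀
  | ω, k+1 => ⋃ j : Fin (m (ω 0)), S (ω 0) j '' levelSets m S K₀ (fun n => ω (n+1)) k

/-- The random attractor `F_ω = ⋂_k ⋃_{i₁,…,i_k} S_{ω₁,i₁} ∘ ⋯ ∘ S_{ω_k,i_k}(K₀)`. -/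
def attractorOf {X : Type*} {N : ℕ} (m : Fin N → ℕ) (S : ∀ i, Fin (m i) → X → X)
    (K₀ : Set X) (ω : ℕ → Fin N) : Set X :=
  ⋂ k, levelSets m S K₀ ω k

/-- `φ` is a bi-Lipschitz contraction. -/
def IsBiLipContraction {K : Type*} [MetricSpace K] (φ : K → K) : Prop :=
  ∃ c C : ℝ, 0 < c ∧ C < 1 ∧
    ∀ x y, c * dist x y ≤ dist (φ x) (φ y) ∧ dist (φ x) (φ y) ≤ C * dist x y

/-!
If some `f` is bi-Lipschitz and a word map `g` contracts so strongly that
`2 * dist (g x) (g y) ≤ dist (f x) (f y)`, then every packing of `g '' F_u` is carried, with the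
same radii, to a packing of `f '' F_u` in which distinct balls keep a positive gap. Each `F_ω` is a
finite union of such sets `g '' F_u`, so a supremum `⊤` of the packing measures of the attractors
makes the gauge sums of separated packings of `f '' F_u` unbounded in `u`, at every scale.

A finite separated packing survives small perturbations of its centres, hence its gauge sum is lower
semicontinuous in `ω`; prepending a word to `u` replaces `f` by `f ∘ wordMap S a`, which gives
density. So for residual `ω` every piece `wordMap S a '' F_u` of `F_ω` has infinite separated
packing sums at every scale. Every relatively open part of `F_ω` contains such a piece, and Baire's
theorem in `F_ω` turns this into an infinite packing measure.
-/

open scoped Topology UniformConvergence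

section Packing

variable {K : Type*} [MetricSpace K] {G : ℝ → ℝ} {δ : ℝ} {E F : Set K}

/-- The supremum of the gauge sums over finite `δ`-packings of `F` by balls whose centres are
further apart than the sum of the radii. Compared with the disjointness required in `packingPre`,
this condition survives small perturbations of the centres. -/
noncomputable def separatedPackingSup (G : ℝ → ℝ) (δ : ℝ) (F : Set K) : ℝ≥0∞ :=
  ⨆ (s : Finset ℕ) (c : ℕ → K) (r : ℕ → ℝ)
    (_ : ∀ n ∈ s, c n ∈ F ∧ 0 < r n ∧ 2 * r n ≤ δ)
    (_ : (s : Set ℕ).Pairwise fun i j => r i + r j < dist (c i) (c j)),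
    ∑ n ∈ s, ENNReal.ofReal (G (2 * r n))

lemma le_separatedPackingSup {s : Finset ℕ} {c : ℕ → K} {r : ℕ → ℝ}
    (h : ∀ n ∈ s, c n ∈ F ∧ 0 < r n ∧ 2 * r n ≤ δ)
    (hsep : (s : Set ℕ).Pairwise fun i j => r i + r j < dist (c i) (c j)) :
    ∑ n ∈ s, ENNReal.ofReal (G (2 * r n)) ≤ separatedPackingSup G δ F :=
  le_iSup_of_le s <| le_iSup_of_le c <| le_iSup_of_le r <| le_iSup_of_le h <|
    le_iSup_of_le hsep le_rfl

lemma separatedPackingSup_mono {δ' : ℝ} (hδ : δ ≤ δ') (hEF : E ⊆ F) :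
    separatedPackingSup G δ E ≤ separatedPackingSup G δ' F :=
  iSup_le fun _ => iSup_le fun _ => iSup_le fun _ => iSup_le fun h => iSup_le fun hsep =>
    le_separatedPackingSup
      (fun n hn => ⟨hEF (h n hn).1, (h n hn).2.1, (h n hn).2.2.trans hδ⟩) hsep

lemma iInf_separatedPackingSup_le_packingPre :
    ⨅ (δ : ℝ) (_ : 0 < δ), separatedPackingSup G δ F ≤ packingPre G F := by
  refine iInf₂_mono fun δ _ => ?_
  refine iSup_le fun s => iSup_le fun c => iSup_le fun r => iSup_le fun h => iSup_le fun hsep => ?_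
  have hdisj : (s : Set ℕ).PairwiseDisjoint fun n => closedBall (c n) (r n) :=
    hsep.imp fun _ _ => closedBall_disjoint_closedBall
  refine le_iSup_of_le (s : Set ℕ) <| le_iSup_of_le c <| le_iSup_of_le r <| le_iSup_of_le h <|
    le_iSup_of_le hdisj (le_of_eq ?_)
  exact (Finset.tsum_subtype s fun n => ENNReal.ofReal (G (2 * r n))).symm

lemma eventually_lt_separatedPackingSup_of_subset_thickening {M : ℝ≥0∞}
    (hM : M < separatedPackingSup G δ F) :
    ∀ᶠ ε in 𝓝[>] (0 : ℝ), ∀ E : Set K, F ⊆ thickening ε E → M < separatedPackingSup G δ E := by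
  simp only [separatedPackingSup, lt_iSup_iff] at hM
  obtain ⟨s, c, r, h, hsep, hlt⟩ := hM
  have hgap : ∀ᶠ ε in 𝓝[>] (0 : ℝ), ∀ i ∈ s, ∀ j ∈ s, i ≠ j →
      r i + r j + 2 * ε < dist (c i) (c j) := by
    simp only [Finset.eventually_all, eventually_imp_distrib_left]
    intro i hi j hj hij
    have hlim : Tendsto (fun ε : ℝ => r i + r j + 2 * ε) (𝓝[>] 0) (𝓝 (r i + r j + 2 * 0)) :=
      (Continuous.tendsto (by fun_prop) 0).mono_left nhdsWithin_le_nhds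
    exact hlim.eventually_lt_const (by simpa using hsep hi hj hij)
  filter_upwards [hgap] with ε hε E hFE
  have : Nonempty K := ⟨c 0⟩
  choose! y hyE hy using fun n hn => mem_thickening_iff.1 (hFE (h n hn).1)
  refine hlt.trans_le (le_separatedPackingSup (fun n hn => ⟨hyE n hn, (h n hn).2⟩) ?_)
  intro i hi j hj hij
  have htri := dist_triangle4 (c i) (y i) (y j) (c j)
  rw [dist_comm (y j)] at htri
  linarith [hε i hi j hj hij, hy i hi, hy j hj]

lemma separatedPackingSup_closure_le :
    separatedPackingSup G δ (closure E) ≤ separatedPackingSup G δ E := by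
  refine le_of_forall_lt fun M hM => ?_
  obtain ⟨ε, hε, hε0⟩ :=
    ((eventually_lt_separatedPackingSup_of_subset_thickening hM).and self_mem_nhdsWithin).exists
  exact hε E (closure_subset_thickening hε0 E)

lemma packingPre_empty : packingPre G (∅ : Set K) = 0 := by
  refine le_antisymm ((iInf₂_le (1 : ℝ) one_pos).trans ?_) bot_le
  refine iSup_le fun s => iSup_le fun c => iSup_le fun r => iSup_le fun h => iSup_le fun _ => ?_
  obtain rfl : s = ∅ := eq_empty_of_forall_notMem fun n hn => (h n hn).1
  simp

lemma packingPre_image_le_separatedPackingSup {X L : Type*} [MetricSpace L] {f : X → K}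
    {g : X → L} {A : Set X} (hδ : 0 < δ)
    (hfg : ∀ x ∈ A, ∀ y ∈ A, 2 * dist (f x) (f y) ≤ dist (g x) (g y)) :
    packingPre G (f '' A) ≤ separatedPackingSup G δ (g '' A) := by
  classical
  rcases A.eq_empty_or_nonempty with rfl | ⟨x₀, -⟩
  · simp [packingPre_empty]
  refine (iInf₂_le δ hδ).trans ?_
  refine iSup_le fun s => iSup_le fun c => iSup_le fun r => iSup_le fun h => iSup_le fun hd => ?_
  have : Nonempty X := ⟨x₀⟩
  choose! x hxA hx using fun n hn => (h n hn).1
  have hradius : ∀ i ∈ s, ∀ j ∈ s, i ≠ j → r i < dist (c i) (c j) := fun i hi j hj hij =>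
    not_le.1 fun hle => disjoint_left.1 (hd hi hj hij)
      (mem_closedBall'.2 hle) (mem_closedBall_self (h j hj).2.1.le)
  rw [tsum_subtype s fun n => ENNReal.ofReal (G (2 * r n)), ENNReal.tsum_eq_iSup_sum]
  refine iSup_le fun t => ?_
  rw [Finset.sum_indicator_eq_sum_filter]
  refine le_separatedPackingSup (c := fun n => g (x n)) (fun n hn => ?_) fun i hi j hj hij => ?_
  · have hn : n ∈ s := (Finset.mem_filter.1 hn).2
    exact ⟨mem_image_of_mem g (hxA n hn), (h n hn).2⟩
  · have hi : i ∈ s := (Finset.mem_filter.1 hi).2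
    have hj : j ∈ s := (Finset.mem_filter.1 hj).2
    have hij' := hradius i hi j hj hij
    have hji' := hradius j hj i hi hij.symm
    have hdist := hfg (x i) (hxA i hi) (x j) (hxA j hj)
    rw [dist_comm] at hji'
    rw [hx i hi, hx j hj] at hdist
    linarith

lemma packingMeasure_eq_ofFunction :
    packingMeasure G F = OuterMeasure.ofFunction (packingPre G) packingPre_empty F := by
  rw [OuterMeasure.ofFunction_apply]
  rfl

lemma packingMeasure_empty : packingMeasure G (∅ : Set K) = 0 := by
  simp [packingMeasure_eq_ofFunction]

lemma packingMeasure_le_packingPre : packingMeasure G F ≤ packingPre G F := by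
  rw [packingMeasure_eq_ofFunction]
  exact OuterMeasure.ofFunction_le F

lemma packingMeasure_le_sum {ι : Type*} [Fintype ι] {A : ι → Set K} (h : F ⊆ ⋃ i, A i) :
    packingMeasure G F ≤ ∑ i, packingMeasure G (A i) := by
  simp only [packingMeasure_eq_ofFunction]
  exact (measure_mono h).trans (measure_iUnion_fintype_le _ _)

lemma exists_isOpen_inter_subset_closure {X ι : Type*} [TopologicalSpace X] [Countable ι]
    {Y : Set X} [BaireSpace Y] [Nonempty Y] {A : ι → Set X} (hA : Y ⊆ ⋃ i, A i) :
    ∃ i U, IsOpen U ∧ (Y ∩ U).Nonempty ∧ Y ∩ U ⊆ closure (A i) := by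
  have hcover : ⋃ i, ((↑) : Y → X) ⁻¹' closure (A i) = univ := by
    rw [← preimage_iUnion]
    exact preimage_val_eq_univ_of_subset (hA.trans (iUnion_mono fun i => subset_closure))
  obtain ⟨i, x, hx⟩ := nonempty_interior_of_iUnion_of_closed
    (fun i => isClosed_closure.preimage continuous_subtype_val) hcover
  obtain ⟨V, hV, hVopen, hxV⟩ := mem_interior.1 hx
  obtain ⟨U, hU, rfl⟩ := isOpen_induced_iff.1 hVopen
  exact ⟨i, U, hU, ⟨x, x.2, hxV⟩, fun y hy => @hV ⟨y, hy.1⟩ hy.2⟩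

lemma packingMeasure_eq_top_of_forall_isOpen [BaireSpace F] [Nonempty F]
    (h : ∀ U, IsOpen U → (F ∩ U).Nonempty → ∀ δ > 0, separatedPackingSup G δ (F ∩ U) = ⊤) :
    packingMeasure G F = ⊤ := by
  simp only [packingMeasure, iInf_eq_top]
  intro A hA
  obtain ⟨n, U, hU, hFU, hsub⟩ := exists_isOpen_inter_subset_closure hA
  have hsup : ∀ δ > 0, separatedPackingSup G δ (A n) = ⊤ := fun δ hδ => top_unique <|
    calc ⊤ = separatedPackingSup G δ (F ∩ U) := (h U hU hFU δ hδ).symm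
      _ ≤ separatedPackingSup G δ (closure (A n)) := separatedPackingSup_mono le_rfl hsub
      _ ≤ separatedPackingSup G δ (A n) := separatedPackingSup_closure_le
  have hpre : ⨅ (δ : ℝ) (_ : 0 < δ), separatedPackingSup G δ (A n) = ⊤ := iInf₂_eq_top.2 hsup
  exact ENNReal.tsum_eq_top_of_eq_top
    ⟨n, top_unique (hpre.ge.trans iInf_separatedPackingSup_le_packingPre)⟩

end Packing

section Shift

lemma isOpenMap_shift {α : Type*} [TopologicalSpace α] (k : ℕ) :
    IsOpenMap fun (ω : ℕ → α) n => ω (n + k) := by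
  refine IsOpenMap.of_sections fun ω => ⟨fun u n => if n < k then ω n else u (n - k), ?_, ?_, ?_⟩
  · refine Continuous.continuousAt (continuous_pi fun n => ?_)
    split_ifs <;> fun_prop
  · funext n
    by_cases hn : n < k
    · simp [hn]
    · exact (if_neg hn).trans <| congrArg ω (Nat.sub_add_cancel (not_lt.1 hn))
  · intro u
    funext n
    simp

lemma eventually_residual_shift {α : Type*} [TopologicalSpace α] {p : (ℕ → α) → Prop}
    (hp : ∀ᶠ u in residual (ℕ → α), p u) (k : ℕ) :
    ∀ᶠ ω in residual (ℕ → α), p fun n => ω (n + k) :=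
  (tendsto_residual_of_isOpenMap (by fun_prop) (isOpenMap_shift k)).eventually hp

end Shift

section Words

variable {X : Type*} {N : ℕ} {m : Fin N → ℕ} {S : ∀ i, Fin (m i) → X → X}

/-- The composition `S_{i₁,j₁} ∘ ⋯ ∘ S_{i_k,j_k}` of the maps spelled out by the finite word
`(i₁,j₁) … (i_k,j_k)`. -/
def wordMap (S : ∀ i, Fin (m i) → X → X) : List (Σ i, Fin (m i)) → X → X
  | [] => id
  | p :: a => S p.1 p.2 ∘ wordMap S a

/-- The sequence `i₁ … i_k u₀ u₁ …` obtained by putting the first indices of the letters of the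
word `(i₁,j₁) … (i_k,j_k)` in front of `u`. -/
def prependWord : List (Σ i, Fin (m i)) → (ℕ → Fin N) → ℕ → Fin N
  | [], u, n => u n
  | p :: _, _, 0 => p.1
  | _ :: a, u, n + 1 => prependWord a u n

lemma prependWord_shift (a : List (Σ i, Fin (m i))) (u : ℕ → Fin N) :
    (fun n => prependWord a u (n + a.length)) = u := by
  induction a with
  | nil => rfl
  | cons _ _ ih => exact ih

lemma mem_cylinder_prependWord_iff {a : List (Σ i, Fin (m i))} {u ω : ℕ → Fin N} :
    ω ∈ PiNat.cylinder (prependWord a u) a.length ↔ ∃ v, prependWord a v = ω := by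
  induction a generalizing ω with
  | nil => exact iff_of_true (by simp) ⟨ω, rfl⟩
  | cons _ _ ih =>
    constructor
    · intro hω
      obtain ⟨v, hv⟩ := ih.1 fun i hi => hω (i + 1) (by simpa using hi)
      refine ⟨v, funext fun n => ?_⟩
      cases n with
      | zero => exact (hω 0 (by simp)).symm
      | succ n => exact congrFun hv n
    · rintro ⟨v, rfl⟩ (_ | i) hi
      · rfl
      · exact ih.2 ⟨v, rfl⟩ i (by simpa using hi)

lemma exists_prependWord_eq (hm : ∀ i, 0 < m i) (k : ℕ) (ω : ℕ → Fin N) :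
    ∃ (a : List (Σ i, Fin (m i))) (u : ℕ → Fin N), a.length = k ∧ prependWord a u = ω := by
  induction k generalizing ω with
  | zero => exact ⟨[], ω, rfl, rfl⟩
  | succ k ih =>
    obtain ⟨a, u, rfl, hu⟩ := ih fun n => ω (n + 1)
    refine ⟨⟨ω 0, 0, hm _⟩ :: a, u, rfl, funext fun n => ?_⟩
    cases n with
    | zero => rfl
    | succ n => exact congrFun hu n

lemma levelSets_antitone (ω : ℕ → Fin N) : Antitone (levelSets m S univ ω) := by
  refine antitone_nat_of_succ_le fun k => ?_
  induction k generalizing ω with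
  | zero => exact subset_univ _
  | succ k ih => exact iUnion_mono fun j => image_mono (ih _)

lemma image_attractorOf_subset (ω : ℕ → Fin N) (j : Fin (m (ω 0))) :
    S (ω 0) j '' attractorOf m S univ (fun n => ω (n + 1)) ⊆ attractorOf m S univ ω := by
  rintro _ ⟨x, hx, rfl⟩
  refine mem_iInter.2 fun k => ?_
  cases k with
  | zero => trivial
  | succ k => exact mem_iUnion.2 ⟨j, _, mem_iInter.1 hx k, rfl⟩

lemma attractorOf_subset_iUnion_image (hS : ∀ i j, Function.Injective (S i j)) (ω : ℕ → Fin N) :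
    attractorOf m S univ ω ⊆ ⋃ j, S (ω 0) j '' attractorOf m S univ fun n => ω (n + 1) := by
  intro x hx
  choose j hj using fun k => mem_iUnion.1 (mem_iInter.1 hx (k + 1))
  -- One first index serves infinitely many levels; injectivity then gives a common preimage.
  obtain ⟨j₀, hj₀⟩ := Finite.exists_infinite_fiber j
  rw [infinite_coe_iff] at hj₀
  obtain ⟨k₀, rfl⟩ := hj₀.nonempty
  obtain ⟨y, -, hy⟩ := hj k₀
  refine mem_iUnion.2 ⟨j k₀, y, mem_iInter.2 fun k => ?_, hy⟩
  obtain ⟨l, hl : j l = j k₀, hkl⟩ := hj₀.exists_gt k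
  obtain ⟨z, hz, hzx⟩ := hl ▸ hj l
  obtain rfl : z = y := hS _ _ (hzx.trans hy.symm)
  exact levelSets_antitone _ hkl.le hz

lemma wordMap_image_attractorOf_subset (a : List (Σ i, Fin (m i))) (u : ℕ → Fin N) :
    wordMap S a '' attractorOf m S univ u ⊆ attractorOf m S univ (prependWord a u) := by
  induction a with
  | nil => exact (image_id _).subset
  | cons p a ih =>
    rw [wordMap, image_comp]
    exact (image_mono ih).trans (image_attractorOf_subset (prependWord (p :: a) u) p.2)

lemma exists_mem_wordMap_image_attractorOf (hS : ∀ i j, Function.Injective (S i j)) (k : ℕ)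
    {ω : ℕ → Fin N} {x : X} (hx : x ∈ attractorOf m S univ ω) :
    ∃ (a : List (Σ i, Fin (m i))) (u : ℕ → Fin N), a.length = k ∧ prependWord a u = ω ∧
      x ∈ wordMap S a '' attractorOf m S univ u := by
  induction k generalizing ω x with
  | zero => exact ⟨[], ω, rfl, rfl, x, hx, rfl⟩
  | succ k ih =>
    obtain ⟨j, y, hy, rfl⟩ := mem_iUnion.1 (attractorOf_subset_iUnion_image hS ω hx)
    obtain ⟨a, u, rfl, hu, z, hz, rfl⟩ := ih hy
    refine ⟨⟨ω 0, j⟩ :: a, u, rfl, funext fun n => ?_, z, hz, rfl⟩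
    cases n with
    | zero => rfl
    | succ n => exact congrFun hu n

lemma mem_attractorOf_of_forall_exists_eq {ω : ℕ → Fin N} {x : ℕ → X}
    (h : ∀ n, ∃ j, x n = S (ω n) j (x (n + 1))) : x 0 ∈ attractorOf m S univ ω := by
  refine mem_iInter.2 fun k => ?_
  induction k generalizing ω x with
  | zero => trivial
  | succ k ih =>
    obtain ⟨j, hj⟩ := h 0
    exact mem_iUnion.2 ⟨j, x 1, ih (x := fun n => x (n + 1)) fun n => h (n + 1), hj.symm⟩

end Words

section Attractor

variable {K : Type*} [MetricSpace K] {N : ℕ} {m : Fin N → ℕ} {S : ∀ i, Fin (m i) → K → K}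
  {C : ℝ≥0} {G : ℝ → ℝ} {δ : ℝ}

lemma IsBiLipContraction.exists_lipschitzWith {φ : K → K} (h : IsBiLipContraction φ) :
    ∃ C : ℝ≥0, C < 1 ∧ LipschitzWith C φ := by
  obtain ⟨c, C, -, hC, H⟩ := h
  refine ⟨C.toNNReal, Real.toNNReal_lt_one.2 hC, LipschitzWith.of_dist_le_mul fun x y => ?_⟩
  exact (H x y).2.trans (mul_le_mul_of_nonneg_right (Real.le_coe_toNNReal C) dist_nonneg)

lemma IsBiLipContraction.exists_antilipschitzWith {φ : K → K} (h : IsBiLipContraction φ) :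
    ∃ A : ℝ≥0, AntilipschitzWith A φ := by
  obtain ⟨c, C, hc, -, H⟩ := h
  refine ⟨⟨c⁻¹, by positivity⟩, AntilipschitzWith.of_le_mul_dist fun x y => ?_⟩
  exact (le_inv_mul_iff₀ hc).2 (H x y).1

lemma exists_uniform_lipschitzWith (hS : ∀ i j, IsBiLipContraction (S i j)) :
    ∃ C : ℝ≥0, C < 1 ∧ ∀ i j, LipschitzWith C (S i j) := by
  choose C hC hLip using fun p : Σ i, Fin (m i) => (hS p.1 p.2).exists_lipschitzWith
  exact ⟨Finset.univ.sup C, (Finset.sup_lt_iff one_pos).2 fun p _ => hC p, fun i j =>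
    (hLip ⟨i, j⟩).weaken (Finset.le_sup (f := C) (Finset.mem_univ (⟨i, j⟩ : Σ i, Fin (m i))))⟩

lemma lipschitzWith_wordMap (hS : ∀ i j, LipschitzWith C (S i j)) (a : List (Σ i, Fin (m i))) :
    LipschitzWith (C ^ a.length) (wordMap S a) := by
  induction a with
  | nil => exact LipschitzWith.id
  | cons p a ih =>
    rw [List.length_cons, pow_succ']
    exact (hS p.1 p.2).comp ih

lemma exists_antilipschitzWith_wordMap (hS : ∀ i j, ∃ A, AntilipschitzWith A (S i j))
    (a : List (Σ i, Fin (m i))) : ∃ A, AntilipschitzWith A (wordMap S a) := by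
  induction a with
  | nil => exact ⟨1, AntilipschitzWith.id⟩
  | cons p a ih =>
    obtain ⟨A, hA⟩ := ih
    obtain ⟨B, hB⟩ := hS p.1 p.2
    exact ⟨_, hB.comp hA⟩

lemma exists_dist_wordMap_lt [BoundedSpace K] (hC : C < 1) (hS : ∀ i j, LipschitzWith C (S i j))
    {ε : ℝ} (hε : 0 < ε) :
    ∃ k : ℕ, ∀ a : List (Σ i, Fin (m i)), a.length = k →
      ∀ x y, dist (wordMap S a x) (wordMap S a y) < ε := by
  have hlim : Tendsto (fun k : ℕ => (C : ℝ) ^ k * diam (univ : Set K)) atTop (𝓝 0) := by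
    simpa using (tendsto_pow_atTop_nhds_zero_of_lt_one C.2 hC).mul_const (diam (univ : Set K))
  obtain ⟨k, hk⟩ := (hlim.eventually_lt_const hε).exists
  refine ⟨k, fun a ha x y => ?_⟩
  calc dist (wordMap S a x) (wordMap S a y) ≤ C ^ k * dist x y := by
        simpa [ha] using (lipschitzWith_wordMap hS a).dist_le_mul x y
    _ ≤ C ^ k * diam univ := by
        gcongr
        exact dist_le_diam_of_mem (Bornology.isBounded_univ.2 ‹_›) (mem_univ x) (mem_univ y)
    _ < ε := hk

lemma isClosed_attractorOf (hS : ∀ i j, IsClosedMap (S i j)) (ω : ℕ → Fin N) :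
    IsClosed (attractorOf m S univ ω) := by
  refine isClosed_iInter fun k => ?_
  induction k generalizing ω with
  | zero => exact isClosed_univ
  | succ k ih => exact isClosed_iUnion_of_finite fun j => hS _ _ _ (ih _)

lemma exists_forall_eq_apply_succ [CompleteSpace K] [BoundedSpace K] [Nonempty K] (hC : C < 1)
    {φ : ℕ → K → K} (hφ : ∀ n, LipschitzWith C (φ n)) :
    ∃ x : ℕ → K, ∀ n, x n = φ n (x (n + 1)) := by
  let T : (ℕ →ᵤ K) → (ℕ →ᵤ K) := fun x =>
    UniformFun.ofFun fun n => φ n (UniformFun.toFun x (n + 1))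
  have hT : ContractingWith C T := by
    refine ⟨hC, LipschitzWith.of_dist_le_mul fun x y => ?_⟩
    refine (UniformFun.dist_le (by positivity)).2 fun n => ((hφ n).dist_le_mul _ _).trans ?_
    gcongr
    exact (UniformFun.dist_le dist_nonneg).1 le_rfl (n + 1)
  have : Nonempty (ℕ →ᵤ K) := ⟨UniformFun.ofFun fun _ => Classical.arbitrary K⟩
  exact ⟨UniformFun.toFun (hT.fixedPoint T), fun n =>
    (congrFun (congrArg UniformFun.toFun hT.fixedPoint_isFixedPt) n).symm⟩

lemma attractorOf_nonempty [CompleteSpace K] [BoundedSpace K] [Nonempty K] (hm : ∀ i, 0 < m i)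
    (hC : C < 1) (hS : ∀ i j, LipschitzWith C (S i j)) (ω : ℕ → Fin N) :
    (attractorOf m S univ ω).Nonempty := by
  obtain ⟨x, hx⟩ := exists_forall_eq_apply_succ hC fun n => hS (ω n) ⟨0, hm _⟩
  exact ⟨x 0, mem_attractorOf_of_forall_exists_eq fun n => ⟨_, hx n⟩⟩

lemma eventually_attractorOf_subset_thickening [CompleteSpace K] [BoundedSpace K]
    (hm : ∀ i, 0 < m i) (hC : C < 1) (hS : ∀ i j, LipschitzWith C (S i j))
    (hinj : ∀ i j, Function.Injective (S i j)) (ω : ℕ → Fin N) {ε : ℝ} (hε : 0 < ε) :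
    ∀ᶠ ω' in 𝓝 ω, attractorOf m S univ ω ⊆ thickening ε (attractorOf m S univ ω') := by
  obtain ⟨k, hk⟩ := exists_dist_wordMap_lt hC hS hε
  filter_upwards [(PiNat.isOpen_cylinder _ ω k).mem_nhds (PiNat.self_mem_cylinder ω k)]
    with ω' hω' x hx
  have : Nonempty K := ⟨x⟩
  obtain ⟨a, u, rfl, rfl, z, -, rfl⟩ := exists_mem_wordMap_image_attractorOf hinj k hx
  obtain ⟨v, rfl⟩ := mem_cylinder_prependWord_iff.1 hω'
  obtain ⟨y, hy⟩ := attractorOf_nonempty hm hC hS v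
  exact mem_thickening_iff.2
    ⟨wordMap S a y, wordMap_image_attractorOf_subset a v ⟨y, hy, rfl⟩, hk a rfl z y⟩

lemma lowerSemicontinuous_separatedPackingSup_image_attractorOf [CompleteSpace K] [BoundedSpace K]
    {L : Type*} [MetricSpace L] (hm : ∀ i, 0 < m i) (hC : C < 1)
    (hS : ∀ i j, LipschitzWith C (S i j)) (hinj : ∀ i j, Function.Injective (S i j))
    {f : K → L} (hf : UniformContinuous f) :
    LowerSemicontinuous fun ω => separatedPackingSup G δ (f '' attractorOf m S univ ω) := by
  intro ω M hM
  obtain ⟨ε, hε, hε0⟩ :=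
    ((eventually_lt_separatedPackingSup_of_subset_thickening hM).and self_mem_nhdsWithin).exists
  obtain ⟨η, hη0, hη⟩ := Metric.uniformContinuous_iff.1 hf ε hε0
  filter_upwards [eventually_attractorOf_subset_thickening hm hC hS hinj ω hη0] with ω' hω'
  refine hε _ ?_
  rintro _ ⟨x, hx, rfl⟩
  obtain ⟨y, hy, hxy⟩ := mem_thickening_iff.1 (hω' hx)
  exact mem_thickening_iff.2 ⟨f y, mem_image_of_mem f hy, hη hxy⟩

lemma iSup_separatedPackingSup_image_attractorOf_eq_top {L : Type*} [MetricSpace L]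
    (hC : C < 1) (hS : ∀ i j, LipschitzWith C (S i j)) (hinj : ∀ i j, Function.Injective (S i j))
    (htop : (⨆ u, packingMeasure G (attractorOf m S univ u)) = ⊤)
    {f : K → L} {A : ℝ≥0} (hf : AntilipschitzWith A f) (hδ : 0 < δ) :
    ⨆ u, separatedPackingSup G δ (f '' attractorOf m S univ u) = ⊤ := by
  have hlim : Tendsto (fun k : ℕ => 2 * ((C : ℝ) ^ k * A)) atTop (𝓝 0) := by
    simpa using ((tendsto_pow_atTop_nhds_zero_of_lt_one C.2 hC).mul_const (A : ℝ)).const_mul 2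
  obtain ⟨k, hk⟩ := (hlim.eventually_lt_const one_pos).exists
  set T := ⨆ u, separatedPackingSup G δ (f '' attractorOf m S univ u)
  have hpiece : ∀ (a : List.Vector (Σ i, Fin (m i)) k) u,
      packingMeasure G (wordMap S a.1 '' attractorOf m S univ u) ≤ T := fun a u => by
    refine packingMeasure_le_packingPre.trans <|
      (packingPre_image_le_separatedPackingSup hδ fun x _ y _ => ?_).trans <|
        le_iSup (fun u => separatedPackingSup G δ (f '' attractorOf m S univ u)) u
    calc 2 * dist (wordMap S a.1 x) (wordMap S a.1 y)
        ≤ 2 * (C ^ k * (A * dist (f x) (f y))) := by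
          have hLip := (lipschitzWith_wordMap hS a.1).dist_le_mul x y
          rw [a.2, NNReal.coe_pow] at hLip
          refine mul_le_mul_of_nonneg_left (hLip.trans ?_) two_pos.le
          gcongr
          exact hf.le_mul_dist x y
      _ = 2 * (C ^ k * A) * dist (f x) (f y) := by ring
      _ ≤ dist (f x) (f y) := mul_le_of_le_one_left dist_nonneg hk.le
  have hsum : ∀ ω, packingMeasure G (attractorOf m S univ ω) ≤
      ∑ _a : List.Vector (Σ i, Fin (m i)) k, T := fun ω => by
    refine (packingMeasure_le_sum (A := fun a : List.Vector (Σ i, Fin (m i)) k =>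
      wordMap S a.1 '' attractorOf m S univ fun n => ω (n + k)) fun x hx => ?_).trans
      (Finset.sum_le_sum fun a _ => hpiece a _)
    obtain ⟨a, u, rfl, rfl, hxa⟩ := exists_mem_wordMap_image_attractorOf hinj k hx
    exact mem_iUnion.2 ⟨⟨a, rfl⟩, by rwa [prependWord_shift]⟩
  by_contra hT
  exact ENNReal.sum_ne_top.2 (fun _ _ => hT) (top_unique (htop.ge.trans (iSup_le hsum)))

lemma dense_setOf_lt_separatedPackingSup_image_attractorOf {L : Type*} [MetricSpace L]
    (hm : ∀ i, 0 < m i) (hS : ∀ i j, IsBiLipContraction (S i j))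
    (htop : (⨆ u, packingMeasure G (attractorOf m S univ u)) = ⊤)
    {f : K → L} {A : ℝ≥0} (hf : AntilipschitzWith A f) (hδ : 0 < δ) {M : ℝ≥0∞} (hM : M < ⊤) :
    Dense {ω | M < separatedPackingSup G δ (f '' attractorOf m S univ ω)} := by
  obtain ⟨C, hC, hLip⟩ := exists_uniform_lipschitzWith hS
  have hanti := fun i j => (hS i j).exists_antilipschitzWith
  have hinj := fun i j => (hanti i j).choose_spec.injective
  refine (PiNat.isTopologicalBasis_cylinders fun _ => Fin N).dense_iff.2 ?_
  rintro _ ⟨ω, k, rfl⟩ -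
  obtain ⟨a, u, rfl, rfl⟩ := exists_prependWord_eq hm k ω
  obtain ⟨B, hB⟩ := exists_antilipschitzWith_wordMap hanti a
  obtain ⟨v, hv⟩ := lt_iSup_iff.1 (hM.trans_eq
    (iSup_separatedPackingSup_image_attractorOf_eq_top hC hLip hinj htop (hf.comp hB) hδ).symm)
  refine ⟨prependWord a v, mem_cylinder_prependWord_iff.2 ⟨v, rfl⟩, hv.trans_le ?_⟩
  rw [image_comp]
  exact separatedPackingSup_mono le_rfl (image_mono (wordMap_image_attractorOf_subset a v))

lemma eventually_residual_separatedPackingSup_eq_top [CompleteSpace K] [BoundedSpace K]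
    {L : Type*} [MetricSpace L] (hm : ∀ i, 0 < m i) (hS : ∀ i j, IsBiLipContraction (S i j))
    (htop : (⨆ u, packingMeasure G (attractorOf m S univ u)) = ⊤)
    {f : K → L} (hf : UniformContinuous f) {A : ℝ≥0} (hfA : AntilipschitzWith A f) :
    ∀ᶠ ω in residual (ℕ → Fin N), ∀ δ > 0,
      separatedPackingSup G δ (f '' attractorOf m S univ ω) = ⊤ := by
  obtain ⟨C, hC, hLip⟩ := exists_uniform_lipschitzWith hS
  have hinj := fun i j => (hS i j).exists_antilipschitzWith.choose_spec.injective
  have hlarge : ∀ᶠ ω in residual (ℕ → Fin N), ∀ n M : ℕ,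
      (M : ℝ≥0∞) < separatedPackingSup G (1 / ((n : ℝ) + 1)) (f '' attractorOf m S univ ω) :=
    eventually_countable_forall.2 fun n => eventually_countable_forall.2 fun M =>
      residual_of_dense_open
        ((lowerSemicontinuous_separatedPackingSup_image_attractorOf hm hC hLip hinj hf)
          |>.isOpen_preimage M)
        (dense_setOf_lt_separatedPackingSup_image_attractorOf hm hS htop hfA
          Nat.one_div_pos_of_nat (ENNReal.natCast_lt_top M))
  filter_upwards [hlarge] with ω hω δ hδ
  obtain ⟨n, hn⟩ := exists_nat_one_div_lt hδ
  refine ENNReal.eq_top_of_forall_nnreal_le fun r => ?_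
  obtain ⟨M, hM⟩ := exists_nat_gt r
  calc (r : ℝ≥0∞) ≤ M := by exact_mod_cast hM.le
    _ ≤ separatedPackingSup G (1 / ((n : ℝ) + 1)) (f '' attractorOf m S univ ω) := (hω n M).le
    _ ≤ separatedPackingSup G δ (f '' attractorOf m S univ ω) :=
        separatedPackingSup_mono hn.le le_rfl

lemma packingMeasure_attractorOf_eq_top [CompleteSpace K] [BoundedSpace K] [Nonempty K]
    (hm : ∀ i, 0 < m i) (hS : ∀ i j, IsBiLipContraction (S i j)) {ω : ℕ → Fin N}
    (h : ∀ (a : List (Σ i, Fin (m i))) (u : ℕ → Fin N), prependWord a u = ω →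
      ∀ δ > 0, separatedPackingSup G δ (wordMap S a '' attractorOf m S univ u) = ⊤) :
    packingMeasure G (attractorOf m S univ ω) = ⊤ := by
  obtain ⟨C, hC, hLip⟩ := exists_uniform_lipschitzWith hS
  have hanti := fun i j => (hS i j).exists_antilipschitzWith.choose_spec
  have hclosed := isClosed_attractorOf
    (fun i j => ((hanti i j).isClosedEmbedding (hLip i j).uniformContinuous).isClosedMap) ω
  have : CompleteSpace (attractorOf m S univ ω) := hclosed.completeSpace_coe
  have : Nonempty (attractorOf m S univ ω) := (attractorOf_nonempty hm hC hLip ω).to_subtype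
  refine packingMeasure_eq_top_of_forall_isOpen ?_
  rintro U hU ⟨x, hx, hxU⟩ δ hδ
  obtain ⟨ε, hε, hball⟩ := Metric.isOpen_iff.1 hU x hxU
  obtain ⟨k, hk⟩ := exists_dist_wordMap_lt hC hLip hε
  obtain ⟨a, u, ha, rfl, z, -, rfl⟩ :=
    exists_mem_wordMap_image_attractorOf (fun i j => (hanti i j).injective) k hx
  refine top_unique ((h a u rfl δ hδ).ge.trans (separatedPackingSup_mono le_rfl ?_))
  refine subset_inter (wordMap_image_attractorOf_subset a u) ?_
  rintro _ ⟨y, -, rfl⟩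
  exact hball (hk a ha y z)

end Attractor

theorem typical_packingG_eq_top_general {K : Type*} [MetricSpace K] [CompleteSpace K]
    [BoundedSpace K] {N : ℕ} (m : Fin N → ℕ) (hm : ∀ i, 0 < m i)
    (S : ∀ i, Fin (m i) → K → K) (hS : ∀ i j, IsBiLipContraction (S i j)) (G : ℝ → ℝ)
    (htop : (⨆ u, packingMeasure G (attractorOf m S univ u)) = ⊤) :
    {ω | packingMeasure G (attractorOf m S univ ω) = ⊤} ∈ residual (ℕ → Fin N) := by
  have : Nonempty K := by
    by_contra hK
    have : IsEmpty K := not_nonempty_iff.1 hK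
    simp [Set.eq_empty_of_isEmpty, packingMeasure_empty] at htop
  obtain ⟨C, -, hLip⟩ := exists_uniform_lipschitzWith hS
  have hwords : ∀ᶠ ω in residual (ℕ → Fin N), ∀ (a : List (Σ i, Fin (m i))), ∀ δ > 0,
      separatedPackingSup G δ
        (wordMap S a '' attractorOf m S univ fun n => ω (n + a.length)) = ⊤ := by
    refine eventually_countable_forall.2 fun a => ?_
    obtain ⟨A, hA⟩ :=
      exists_antilipschitzWith_wordMap (fun i j => (hS i j).exists_antilipschitzWith) a
    exact eventually_residual_shift (eventually_residual_separatedPackingSup_eq_top hm hS htop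
      (lipschitzWith_wordMap hLip a).uniformContinuous hA) a.length
  filter_upwards [hwords] with ω hω
  refine packingMeasure_attractorOf_eq_top hm hS ?_
  rintro a u rfl
  simpa only [prependWord_shift] using hω a

/-- For a doubling gauge `G`, if the supremal `𝒫^G`-measure of the random attractors is
infinite, then the set of `ω` with `𝒫^G(F_ω) = ∞` is residual. -/
theorem typical_packingG_eq_top {K : Type*} [MetricSpace K] [CompactSpace K] [Nonempty K]
    {N : ℕ} (hN : 0 < N) (m : Fin N → ℕ) (hm : ∀ i, 0 < m i)
    (S : ∀ i, Fin (m i) → K → K) (hS : ∀ i j, IsBiLipContraction (S i j))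
    (G : ℝ → ℝ) (hG : IsGauge G) (hdbl : DoublingGauge G)
    (h0 : (⨆ u : ℕ → Fin N, packingMeasure G (attractorOf m S Set.univ u)) = ⊤) :
    {ω : ℕ → Fin N | packingMeasure G (attractorOf m S Set.univ ω) = ⊤} ∈
      residual (ℕ → Fin N) :=
  typical_packingG_eq_top_general m hm S hS G h0
end

section
/- Suppose the RIFS $\mathbb{I}$ consists of similarity maps on $\mathbb{R}^n$ satisfying the uniform open set condition, and let $s_{\min} = \min_i s_i$, where $s_i$ solves $\sum_{j \in \mathcal{I}_i} \mathrm{Lip}(S_{i,j})^{s_i} = 1$. Then $\inf_{\omega \in \Omega} \mathcal{H}^{s_{\min}}(F_\omega) > 0$; in particular $\dim_H F_\omega \geq s_{\min}$ for all $\omega$. -/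
open Metric MeasureTheory Filter Set
open scoped ENNReal NNReal

/-!
Place mass one on the attractor by sending mass `ρ i j ^ s i` down the branch `j` of the `i`-th
system. Measure the size of a set `U` at scale `r` by the `d`-dimensional volume of the part of `O`
within distance `R * r` of `U`, divided by `r ^ d`. Since the images of `O` are disjoint and
similarities rescale volume exactly, the sizes of the preimages `S i j ⁻¹' U` at the scales
`r / ρ i j` add up to at most the size of `U` at scale `r`; since `ρ i j ^ s i ≤ ρ i j ^ smin`,
induction on the level bounds the mass of `U` by a constant times `r ^ smin` times its size at
scale `r`. A ball of radius `r` has bounded size at scale `r`, so every weak limit of the level-`k`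
masses satisfies the mass distribution principle with exponent `smin`, with a constant that does
not depend on `ω`.
-/

section MassDistribution

/-- The mass distribution principle. -/
theorem inv_smul_le_hausdorffMeasure {X : Type*} [MetricSpace X] [MeasurableSpace X]
    [BorelSpace X] {ν : Measure X} {C : ℝ≥0∞} {t δ : ℝ} (hδ : 0 < δ)
    (hball : ∀ x, ∀ r ∈ Ioo 0 δ, ν (ball x r) ≤ C * ENNReal.ofReal r ^ t) :
    C⁻¹ • ν ≤ μH[t] := by
  refine Measure.le_hausdorffMeasure t _ (ENNReal.ofReal (δ / 2)) (by simpa) fun A hA => ?_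
  rcases A.eq_empty_or_nonempty with rfl | ⟨x, hx⟩
  · simp
  have hAtop : ediam A ≠ ∞ := ne_top_of_le_ne_top ENNReal.ofReal_ne_top hA
  have hAδ : diam A < δ :=
    (ENNReal.toReal_le_of_le_ofReal (by positivity) hA).trans_lt (by linarith)
  have hle : ∀ r ∈ Ioo (diam A) δ, C⁻¹ * ν A ≤ ENNReal.ofReal r ^ t := fun r hr => by
    have hsub : A ⊆ ball x r := fun y hy =>
      (dist_le_diam_of_mem' hAtop hy hx).trans_lt hr.1
    rw [mul_comm, ← div_eq_mul_inv]
    exact ENNReal.div_le_of_le_mul'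
      ((measure_mono hsub).trans (hball x r ⟨diam_nonneg.trans_lt hr.1, hr.2⟩))
  -- The radius decreases to `diam A` instead of being equal to it, because `diam A` may be `0`.
  have hlim : Tendsto (fun r : ℝ => ENNReal.ofReal r ^ t) (nhdsWithin (diam A) (Ioi (diam A)))
      (nhds (ediam A ^ t)) := by
    rw [← ENNReal.ofReal_toReal hAtop]
    exact ((ENNReal.continuous_rpow_const.comp ENNReal.continuous_ofReal).tendsto _).mono_left
      nhdsWithin_le_nhds
  exact ge_of_tendsto hlim (eventually_of_mem (Ioo_mem_nhdsGT hAδ) hle)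

theorem exists_measure_iInter_eq_one_le_limsup {X : Type*} [TopologicalSpace X] [T2Space X]
    [HasOuterApproxClosed X] [MeasurableSpace X] [BorelSpace X] (μ : ℕ → Measure X)
    [∀ k, IsProbabilityMeasure (μ k)] {L : ℕ → Set X} (hL : Antitone L)
    (hLc : ∀ k, IsCompact (L k)) (hμL : ∀ k, μ k (L k)ᶜ = 0) :
    ∃ ν : Measure X, ν (⋂ k, L k) = 1 ∧
      ∀ G, IsOpen G → ν G ≤ limsup (fun k => μ k G) atTop := by
  let P : ℕ → ProbabilityMeasure X := fun k => ⟨μ k, inferInstance⟩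
  have hnull : ∀ k l, k ≤ l → μ l (L k)ᶜ = 0 := fun k l hkl =>
    measure_mono_null (compl_subset_compl.2 (hL hkl)) (hμL l)
  have htight : IsTightMeasureSet {((p : ProbabilityMeasure X) : Measure X) | p ∈ range P} := by
    refine isTightMeasureSet_iff_exists_isCompact_measure_compl_le.2 fun ε _ => ⟨L 0, hLc 0, ?_⟩
    rintro _ ⟨_, ⟨k, rfl⟩, rfl⟩
    exact (hnull 0 k k.zero_le).trans_le zero_le
  let F : Ultrafilter ℕ := Ultrafilter.of atTop
  obtain ⟨ν, -, hν⟩ := (isCompact_closure_of_isTightMeasureSet htight).ultrafilter_le_nhds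
    (F.map P) (le_principal_iff.2 (mem_map.2 (univ_mem' fun k => subset_closure ⟨k, rfl⟩)))
  have hopen : ∀ G, IsOpen G → (ν : Measure X) G ≤ limsup (fun k => μ k G) atTop := fun G hG =>
    calc (ν : Measure X) G
      _ ≤ liminf (fun k => μ k G) F := ProbabilityMeasure.le_liminf_measure_open_of_tendsto hν hG
      _ ≤ limsup (fun k => μ k G) F := liminf_le_limsup
      _ ≤ limsup (fun k => μ k G) atTop := limsup_le_limsup_of_le (Ultrafilter.of_le atTop)
  refine ⟨ν, ?_, hopen⟩
  rw [← prob_compl_eq_zero_iff (MeasurableSet.iInter fun k => (hLc k).measurableSet), compl_iInter]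
  refine measure_iUnion_null fun k => nonpos_iff_eq_zero.1 ?_
  refine (hopen _ (hLc k).isClosed.isOpen_compl).trans (limsup_le_of_le (h := ?_))
  filter_upwards [eventually_ge_atTop k] with l hkl using (hnull k l hkl).le

theorem measure_le_of_one_le_of_inter_nonempty {X : Type*} [MeasurableSpace X] {μ : Measure X}
    [IsProbabilityMeasure μ] {K U : Set X} {b : ℝ≥0∞} (hK : μ Kᶜ = 0)
    (hb : (U ∩ K).Nonempty → 1 ≤ b) : μ U ≤ b := by
  by_cases hUK : (U ∩ K).Nonempty
  · exact prob_le_one.trans (hb hUK)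
  · rw [measure_mono_null (fun x hxU hxK => hUK ⟨x, hxU, hxK⟩) hK]
    exact zero_le

theorem exists_forall_le_measure_inter_ball {X : Type*} [PseudoMetricSpace X] [MeasurableSpace X]
    [OpensMeasurableSpace X] {μ : Measure X} {O K : Set X} (hO : μ O ≠ 0)
    (hK : Bornology.IsBounded K) :
    ∃ R : ℝ, 0 ≤ R ∧ ∃ v : ℝ≥0∞, v ≠ 0 ∧ ∀ x ∈ K, v ≤ μ (O ∩ ball x R) := by
  obtain ⟨x₀, -⟩ := nonempty_of_measure_ne_zero hO
  obtain ⟨l, hl⟩ := exists_pos_ball x₀ (Measure.restrict_eq_zero.not.2 hO)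
  obtain ⟨D, hD, hKD⟩ := hK.subset_ball_lt 0 x₀
  refine ⟨l + D, by positivity, μ.restrict O (ball x₀ l), hl.ne', fun x hx => ?_⟩
  rw [Measure.restrict_apply measurableSet_ball, inter_comm]
  gcongr
  exact ball_subset_ball' (by gcongr; exact (mem_ball'.1 (hKD hx)).le)

theorem ofReal_le_dimH_of_hausdorffMeasure_ne_zero {X : Type*} [EMetricSpace X]
    [MeasurableSpace X] [BorelSpace X] {A : Set X} {t : ℝ} (hA : μH[t] A ≠ 0) :
    ENNReal.ofReal t ≤ dimH A := by
  rcases le_total t 0 with ht | ht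
  · simp [ENNReal.ofReal_of_nonpos ht]
  · exact le_dimH_of_hausdorffMeasure_ne_zero (by rwa [Real.coe_toNNReal t ht])

theorem exists_hausdorffMeasure_finrank_ball_le (E : Type*) [NormedAddCommGroup E]
    [NormedSpace ℝ E] [FiniteDimensional ℝ E] [MeasurableSpace E] [BorelSpace E] :
    ∃ C : ℝ≥0∞, C ≠ ∞ ∧ ∀ (x : E) (r : ℝ), 0 < r →
      μH[Module.finrank ℝ E] (ball x r) ≤ C * ENNReal.ofReal r ^ (Module.finrank ℝ E : ℝ) :=
  ⟨μH[Module.finrank ℝ E] (ball (0 : E) 1), measure_ball_lt_top.ne, fun x r hr => by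
    rw [Measure.addHaar_ball_of_pos _ x hr, ENNReal.ofReal_pow hr.le, ENNReal.rpow_natCast,
      mul_comm]⟩

end MassDistribution

section Similarity

variable {X Y : Type*} [MetricSpace X] [MetricSpace Y] {f : X → Y} {q : ℝ}

theorem isClosedEmbedding_of_dist_eq_mul [CompleteSpace X] (hq : 0 < q)
    (hf : ∀ x y, dist (f x) (f y) = q * dist x y) : Topology.IsClosedEmbedding f :=
  Dilation.isClosedEmbedding
    (Dilation.mkOfDistEq f ⟨⟨q, hq.le⟩, fun h => hq.ne' (congrArg NNReal.toReal h), hf⟩)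

theorem hausdorffMeasure_image_of_dist_eq_mul [MeasurableSpace X] [BorelSpace X]
    [MeasurableSpace Y] [BorelSpace Y] {d : ℝ} (hd : 0 ≤ d) (hq : 0 < q)
    (hf : ∀ x y, dist (f x) (f y) = q * dist x y) (A : Set X) :
    μH[d] (f '' A) = ENNReal.ofReal q ^ d * μH[d] A := by
  have hlip : LipschitzWith q.toNNReal f :=
    LipschitzWith.of_dist_le_mul fun x y => by rw [hf, Real.coe_toNNReal q hq.le]
  have hanti : AntilipschitzWith (q.toNNReal)⁻¹ f := AntilipschitzWith.of_le_mul_dist fun x y => by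
    rw [hf, NNReal.coe_inv, Real.coe_toNNReal q hq.le, inv_mul_cancel_left₀ hq.ne']
  refine (hlip.hausdorffMeasure_image_le hd A).antisymm ?_
  have hle := hanti.le_hausdorffMeasure_image hd A
  rwa [ENNReal.coe_inv (by simpa using hq), ENNReal.inv_rpow, ← ENNReal.div_eq_inv_mul,
    ENNReal.le_div_iff_mul_le (by simp [hq]) (by simp [hd]), mul_comm] at hle

theorem image_thickening_preimage_subset (hq : 0 < q)
    (hf : ∀ x y, dist (f x) (f y) = q * dist x y) (δ : ℝ) (U : Set Y) :
    f '' thickening (δ / q) (f ⁻¹' U) ⊆ thickening δ U := by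
  rintro _ ⟨x, hx, rfl⟩
  obtain ⟨y, hy, hxy⟩ := mem_thickening_iff.1 hx
  exact mem_thickening_iff.2 ⟨f y, hy, by rwa [hf, ← lt_div_iff₀' hq]⟩

end Similarity

section Levels

variable {X : Type*} {N : ℕ} {m : Fin N → ℕ} {S : ∀ i, Fin (m i) → X → X} {K₀ : Set X}

theorem levelSets_succ_subset (hK : ∀ i j, S i j '' K₀ ⊆ K₀) (ω : ℕ → Fin N) (k : ℕ) :
    levelSets m S K₀ ω (k + 1) ⊆ levelSets m S K₀ ω k := by
  induction k generalizing ω with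
  | zero => exact iUnion_subset fun j => hK _ j
  | succ k ih => exact iUnion_mono fun j => image_mono (ih _)

theorem antitone_levelSets (hK : ∀ i j, S i j '' K₀ ⊆ K₀) (ω : ℕ → Fin N) :
    Antitone (levelSets m S K₀ ω) :=
  antitone_nat_of_succ_le (levelSets_succ_subset hK ω)

theorem isCompact_levelSets [TopologicalSpace X] (hS : ∀ i j, Continuous (S i j))
    (hK : IsCompact K₀) (ω : ℕ → Fin N) (k : ℕ) : IsCompact (levelSets m S K₀ ω k) := by
  induction k generalizing ω with
  | zero => exact hK
  | succ k ih => exact isCompact_iUnion fun j => (ih _).image (hS _ j)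

/-- The level-`k` approximation of the natural measure on the random attractor: the image of `z`
under the composition `S_{ω₁,i₁} ∘ ⋯ ∘ S_{ω_k,i_k}` carries the product of the weights
`p (ω_l) (i_l)`. -/
noncomputable def levelMeasure [MeasurableSpace X] (p : ∀ i, Fin (m i) → ℝ≥0∞)
    (S : ∀ i, Fin (m i) → X → X) (z : X) : (ℕ → Fin N) → ℕ → Measure X
  | _, 0 => Measure.dirac z
  | ω, k + 1 => ∑ j, p (ω 0) j • (levelMeasure p S z (fun l => ω (l + 1)) k).map (S (ω 0) j)

variable [MeasurableSpace X] {p : ∀ i, Fin (m i) → ℝ≥0∞} {z : X}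

theorem levelMeasure_succ_apply (hS : ∀ i j, Measurable (S i j)) (ω : ℕ → Fin N) (k : ℕ)
    {U : Set X} (hU : MeasurableSet U) :
    levelMeasure p S z ω (k + 1) U =
      ∑ j, p (ω 0) j * levelMeasure p S z (fun l => ω (l + 1)) k (S (ω 0) j ⁻¹' U) := by
  simp [levelMeasure, Measure.map_apply (hS _ _) hU]

theorem isProbabilityMeasure_levelMeasure (hS : ∀ i j, Measurable (S i j))
    (hp : ∀ i, ∑ j, p i j = 1) (ω : ℕ → Fin N) (k : ℕ) :
    IsProbabilityMeasure (levelMeasure p S z ω k) := by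
  induction k generalizing ω with
  | zero => exact Measure.dirac.isProbabilityMeasure
  | succ k ih =>
    have := ih fun l => ω (l + 1)
    exact ⟨by simp [levelMeasure_succ_apply hS ω k MeasurableSet.univ, hp]⟩

theorem levelMeasure_compl_levelSets (hS : ∀ i j, Measurable (S i j)) (hz : z ∈ K₀)
    (hmeas : ∀ ω k, MeasurableSet (levelSets m S K₀ ω k)) (ω : ℕ → Fin N) (k : ℕ) :
    levelMeasure p S z ω k (levelSets m S K₀ ω k)ᶜ = 0 := by
  induction k generalizing ω with
  | zero => exact (Measure.dirac_apply' z (hmeas ω 0).compl).trans (by simp [levelSets, hz])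
  | succ k ih =>
    rw [levelMeasure_succ_apply hS ω k (hmeas ω (k + 1)).compl]
    refine Finset.sum_eq_zero fun j _ => ?_
    have hsub : S (ω 0) j ⁻¹' (levelSets m S K₀ ω (k + 1))ᶜ ⊆
        (levelSets m S K₀ (fun l => ω (l + 1)) k)ᶜ := fun x hx hx' =>
      hx (mem_iUnion.2 ⟨j, mem_image_of_mem _ hx'⟩)
    rw [measure_mono_null hsub (ih _), mul_zero]

theorem levelMeasure_compl_eq_zero [TopologicalSpace X] [T2Space X] [BorelSpace X]
    (hS : ∀ i j, Continuous (S i j)) (hKc : IsCompact K₀) (hK : ∀ i j, S i j '' K₀ ⊆ K₀)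
    (hz : z ∈ K₀) (ω : ℕ → Fin N) (k : ℕ) : levelMeasure p S z ω k K₀ᶜ = 0 :=
  measure_mono_null (compl_subset_compl.2 (antitone_levelSets hK ω k.zero_le))
    (levelMeasure_compl_levelSets (fun i j => (hS i j).measurable) hz
      (fun ω k => (isCompact_levelSets hS hKc ω k).measurableSet) ω k)

end Levels

theorem inv_le_hausdorffMeasure_attractorOf {X : Type*} [MetricSpace X] [MeasurableSpace X]
    [BorelSpace X] {N : ℕ} {m : Fin N → ℕ} {S : ∀ i, Fin (m i) → X → X} {K₀ : Set X}
    {p : ∀ i, Fin (m i) → ℝ≥0∞} {z : X} {C : ℝ≥0∞} {t δ : ℝ}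
    (hS : ∀ i j, Continuous (S i j)) (hp : ∀ i, ∑ j, p i j = 1) (hKc : IsCompact K₀)
    (hK : ∀ i j, S i j '' K₀ ⊆ K₀) (hz : z ∈ K₀) (ω : ℕ → Fin N) (hδ : 0 < δ)
    (hball : ∀ x, ∀ r ∈ Ioo 0 δ,
      limsup (fun k => levelMeasure p S z ω k (ball x r)) atTop ≤ C * ENNReal.ofReal r ^ t) :
    C⁻¹ ≤ μH[t] (attractorOf m S K₀ ω) := by
  have hS' : ∀ i j, Measurable (S i j) := fun i j => (hS i j).measurable
  have hcompact := isCompact_levelSets hS hKc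
  have := isProbabilityMeasure_levelMeasure (z := z) hS' hp ω
  obtain ⟨ν, hν, hνopen⟩ := exists_measure_iInter_eq_one_le_limsup (levelMeasure p S z ω)
    (antitone_levelSets hK ω) (hcompact ω)
    (levelMeasure_compl_levelSets hS' hz (fun ω k => (hcompact ω k).measurableSet) ω)
  have hle := inv_smul_le_hausdorffMeasure hδ
    (fun x r hr => (hνopen _ isOpen_ball).trans (hball x r hr)) (attractorOf m S K₀ ω)
  rwa [Measure.smul_apply, attractorOf, hν, smul_eq_mul, mul_one] at hle

/-- The open set condition for a single iterated function system `f`, with feasible open set `O`.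
The uniform open set condition for a family of systems asks for it with the same `O` throughout. -/
structure OpenSetCondition {ι X : Type*} [TopologicalSpace X] (f : ι → X → X) (O : Set X) :
    Prop where
  isOpen : IsOpen O
  image_subset : ∀ j, f j '' O ⊆ O
  pairwise_disjoint : Pairwise fun j j' => Disjoint (f j '' O) (f j' '' O)

/-- The size of `U` at scale `r` relative to `O`: the `d`-dimensional volume of the part of `O`
within distance `R * r` of `U`, in units of `r ^ d`. -/
noncomputable def scaledVolume {X : Type*} [MetricSpace X] [MeasurableSpace X] [BorelSpace X]
    (d R : ℝ) (O : Set X) (r : ℝ) (U : Set X) : ℝ≥0∞ :=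
  μH[d] (O ∩ thickening (R * r) U) / ENNReal.ofReal r ^ d

section ScaledVolume

variable {X : Type*} [MetricSpace X] [MeasurableSpace X] [BorelSpace X] {d R r : ℝ} {O U : Set X}

theorem scaledVolume_div_preimage {f : X → X} {q : ℝ} (hd : 0 ≤ d) (hq : 0 < q)
    (hf : ∀ x y, dist (f x) (f y) = q * dist x y) :
    scaledVolume d R O (r / q) (f ⁻¹' U) =
      μH[d] (f '' (O ∩ thickening (R * r / q) (f ⁻¹' U))) / ENNReal.ofReal r ^ d := by
  rw [scaledVolume, mul_div_assoc, hausdorffMeasure_image_of_dist_eq_mul hd hq hf,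
    ENNReal.ofReal_div_of_pos hq, ENNReal.div_rpow_of_nonneg _ _ hd, ENNReal.div_eq_inv_mul,
    ENNReal.inv_div (by simp [hd]) (by simp [hq]), mul_comm, ← mul_div_assoc, mul_comm]

theorem OpenSetCondition.sum_scaledVolume_preimage_le [CompleteSpace X] {ι : Type*} [Fintype ι]
    {f : ι → X → X} {q : ι → ℝ} (hO : OpenSetCondition f O) (hd : 0 ≤ d) (hq : ∀ j, 0 < q j)
    (hf : ∀ j x y, dist (f j x) (f j y) = q j * dist x y) :
    ∑ j, scaledVolume d R O (r / q j) (f j ⁻¹' U) ≤ scaledVolume d R O r U := by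
  let A : ι → Set X := fun j => f j '' (O ∩ thickening (R * r / q j) (f j ⁻¹' U))
  have hA : ∀ j, MeasurableSet (A j) := fun j =>
    (isClosedEmbedding_of_dist_eq_mul (hq j) (hf j)).measurableEmbedding.measurableSet_image.2
      (hO.isOpen.inter isOpen_thickening).measurableSet
  have hdisj : Pairwise (Function.onFun Disjoint A) := fun j j' hjj' =>
    (hO.pairwise_disjoint hjj').mono (image_mono inter_subset_left) (image_mono inter_subset_left)
  have hsub : ⋃ j, A j ⊆ O ∩ thickening (R * r) U := iUnion_subset fun j =>
    subset_inter ((image_mono inter_subset_left).trans (hO.image_subset j))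
      ((image_mono inter_subset_right).trans
        (image_thickening_preimage_subset (hq j) (hf j) _ _))
  calc ∑ j, scaledVolume d R O (r / q j) (f j ⁻¹' U)
    _ = ∑ j, μH[d] (A j) / ENNReal.ofReal r ^ d :=
      Finset.sum_congr rfl fun j _ => scaledVolume_div_preimage hd (hq j) (hf j)
    _ = μH[d] (⋃ j, A j) / ENNReal.ofReal r ^ d := by
      simp only [div_eq_mul_inv, ← Finset.sum_mul, measure_iUnion hdisj hA, tsum_fintype]
    _ ≤ scaledVolume d R O r U := by unfold scaledVolume; gcongr

theorem scaledVolume_ball_le {C : ℝ≥0∞} (hd : 0 ≤ d) (hR : 0 ≤ R)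
    (hreg : ∀ (x : X) (r : ℝ), 0 < r → μH[d] (ball x r) ≤ C * ENNReal.ofReal r ^ d)
    (hr : 0 < r) (x : X) :
    scaledVolume d R O r (ball x r) ≤ C * ENNReal.ofReal (R + 1) ^ d := by
  have hsub : O ∩ thickening (R * r) (ball x r) ⊆ ball x ((R + 1) * r) := by
    rw [add_one_mul]
    exact inter_subset_right.trans (thickening_ball x _ _)
  have hle := (measure_mono hsub).trans (hreg x _ (by positivity))
  refine ENNReal.div_le_of_le_mul (hle.trans_eq ?_)
  rw [ENNReal.ofReal_mul (by positivity), ENNReal.mul_rpow_of_nonneg _ _ hd, mul_assoc]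

theorem exists_one_le_mul_scaledVolume {K : Set X} (hd : 0 ≤ d) (hO : μH[d] O ≠ 0)
    (hK : Bornology.IsBounded K) (t B : ℝ) :
    ∃ R : ℝ, 0 ≤ R ∧ ∃ c : ℝ≥0∞, c ≠ ∞ ∧ ∀ U : Set X, (U ∩ K).Nonempty → ∀ r ∈ Icc 1 B,
      1 ≤ c * ENNReal.ofReal r ^ t * scaledVolume d R O r U := by
  obtain ⟨R, hR, v, hv, hvK⟩ := exists_forall_le_measure_inter_ball hO hK
  have hpos : ENNReal.ofReal B ^ (-|t|) * (v / ENNReal.ofReal B ^ d) ≠ 0 :=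
    mul_ne_zero (by simp [ENNReal.rpow_neg]) (by simp [hv, hd])
  obtain ⟨c, hc⟩ := ENNReal.exists_nat_mul_gt hpos ENNReal.one_ne_top
  refine ⟨R, hR, c, ENNReal.natCast_ne_top c, fun U ⟨x, hxU, hxK⟩ r ⟨hr, hrB⟩ => ?_⟩
  have hpow : ENNReal.ofReal B ^ (-|t|) ≤ ENNReal.ofReal r ^ t :=
    calc ENNReal.ofReal B ^ (-|t|)
      _ ≤ ENNReal.ofReal r ^ (-|t|) := by
        rw [ENNReal.rpow_neg, ENNReal.rpow_neg]
        gcongr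
      _ ≤ ENNReal.ofReal r ^ t :=
        ENNReal.rpow_le_rpow_of_exponent_le (ENNReal.one_le_ofReal.2 hr) (neg_abs_le t)
  have hball : ball x R ⊆ thickening (R * r) U :=
    (ball_subset_ball (le_mul_of_one_le_right hR hr)).trans (ball_subset_thickening hxU _)
  have hvol : v / ENNReal.ofReal B ^ d ≤ scaledVolume d R O r U := by
    have := (hvK x hxK).trans (measure_mono (inter_subset_inter_right O hball))
    unfold scaledVolume
    gcongr
  rw [mul_assoc]
  exact hc.le.trans (by gcongr)

end ScaledVolume

theorem ofReal_rpow_mul_div_rpow_le {q r s t : ℝ} (hq0 : 0 < q) (hq1 : q ≤ 1) (hr : 0 < r)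
    (hts : t ≤ s) :
    ENNReal.ofReal (q ^ s) * ENNReal.ofReal (r / q) ^ t ≤ ENNReal.ofReal r ^ t := by
  rw [ENNReal.ofReal_rpow_of_pos (by positivity), ENNReal.ofReal_rpow_of_pos hr,
    ← ENNReal.ofReal_mul (by positivity)]
  refine ENNReal.ofReal_le_ofReal ?_
  calc q ^ s * (r / q) ^ t
    _ ≤ q ^ t * (r / q) ^ t := by
      gcongr ?_ * _
      exact Real.rpow_le_rpow_of_exponent_ge hq0 hq1 hts
    _ = r ^ t := by rw [← Real.mul_rpow hq0.le (by positivity), mul_div_cancel₀ r hq0.ne']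

theorem exists_forall_mem_Icc_of_forall_mem_Ioo {ι : Type*} [Finite ι] {x : ι → ℝ} {l u : ℝ}
    (hlu : l < u) (hx : ∀ i, x i ∈ Ioo l u) :
    ∃ a ∈ Ioo l u, ∃ b ∈ Ioo l u, ∀ i, x i ∈ Icc a b := by
  have hlower : ∀ᶠ a in nhdsWithin l (Ioi l), ∀ i, a ≤ x i :=
    eventually_all.2 fun i => eventually_of_mem (Ioo_mem_nhdsGT (hx i).1) fun _ ha => ha.2.le
  have hupper : ∀ᶠ b in nhdsWithin u (Iio u), ∀ i, x i ≤ b :=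
    eventually_all.2 fun i => eventually_of_mem (Ioo_mem_nhdsLT (hx i).2) fun _ hb => hb.1.le
  obtain ⟨a, ha, halu⟩ := (hlower.and (Ioo_mem_nhdsGT hlu)).exists
  obtain ⟨b, hb, hblu⟩ := (hupper.and (Ioo_mem_nhdsLT hlu)).exists
  exact ⟨a, halu, b, hblu, fun i => ⟨ha i, hb i⟩⟩

section LowerBound

variable {X : Type*} [MetricSpace X] [CompleteSpace X] [MeasurableSpace X] [BorelSpace X]
  {N : ℕ} {m : Fin N → ℕ} {S : ∀ i, Fin (m i) → X → X} {ρ : ∀ i, Fin (m i) → ℝ} {O K₀ : Set X}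
  {s : Fin N → ℝ} {d t : ℝ}

theorem levelMeasure_le_mul_scaledVolume {z : X} {a b R : ℝ} {c : ℝ≥0∞} (hd : 0 ≤ d) (ha : 0 < a)
    (hb0 : 0 < b) (hb1 : b ≤ 1) (hρ : ∀ i j, ρ i j ∈ Icc a b)
    (hsim : ∀ i j x y, dist (S i j x) (S i j y) = ρ i j * dist x y)
    (hO : ∀ i, OpenSetCondition (S i) O) (hts : ∀ i, t ≤ s i)
    (hlarge : ∀ ω k U, ∀ r ∈ Icc 1 a⁻¹,
      levelMeasure (fun i j => ENNReal.ofReal (ρ i j ^ s i)) S z ω k U ≤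
        c * ENNReal.ofReal r ^ t * scaledVolume d R O r U)
    (ω : ℕ → Fin N) (k : ℕ) {U : Set X} (hU : MeasurableSet U) {r : ℝ}
    (hr : r ∈ Icc (b ^ k) a⁻¹) :
    levelMeasure (fun i j => ENNReal.ofReal (ρ i j ^ s i)) S z ω k U ≤
      c * ENNReal.ofReal r ^ t * scaledVolume d R O r U := by
  have hρ0 : ∀ i j, 0 < ρ i j := fun i j => ha.trans_le (hρ i j).1
  have hS : ∀ i j, Measurable (S i j) := fun i j =>
    (isClosedEmbedding_of_dist_eq_mul (hρ0 i j) (hsim i j)).continuous.measurable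
  induction k generalizing ω U r with
  | zero => exact hlarge ω 0 U r (by simpa using hr)
  | succ k ih =>
    rcases le_or_gt 1 r with hr1 | hr1
    · exact hlarge ω (k + 1) U r ⟨hr1, hr.2⟩
    have hr0 : 0 < r := (pow_pos hb0 _).trans_le hr.1
    have hscale : ∀ i j, r / ρ i j ∈ Icc (b ^ k) a⁻¹ := fun i j => by
      constructor
      · rw [le_div_iff₀ (hρ0 i j)]
        exact (mul_le_mul_of_nonneg_left (hρ i j).2 (by positivity)).trans hr.1
      · calc r / ρ i j ≤ 1 / a := div_le_div₀ one_pos.le hr1.le ha (hρ i j).1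
          _ = a⁻¹ := one_div a
    rw [levelMeasure_succ_apply hS ω k hU]
    set i := ω 0
    calc ∑ j, ENNReal.ofReal (ρ i j ^ s i) *
          levelMeasure _ S z (fun l => ω (l + 1)) k (S i j ⁻¹' U)
      _ ≤ ∑ j, ENNReal.ofReal (ρ i j ^ s i) * (c * ENNReal.ofReal (r / ρ i j) ^ t *
          scaledVolume d R O (r / ρ i j) (S i j ⁻¹' U)) := by
        gcongr with j
        exact ih _ (hS i j hU) (hscale i j)
      _ = ∑ j, c * (ENNReal.ofReal (ρ i j ^ s i) * ENNReal.ofReal (r / ρ i j) ^ t) *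
          scaledVolume d R O (r / ρ i j) (S i j ⁻¹' U) :=
        Finset.sum_congr rfl fun j _ => by ring
      _ ≤ ∑ j, c * ENNReal.ofReal r ^ t * scaledVolume d R O (r / ρ i j) (S i j ⁻¹' U) := by
        gcongr with j
        exact ofReal_rpow_mul_div_rpow_le (hρ0 i j) ((hρ i j).2.trans hb1) hr0 (hts i)
      _ ≤ c * ENNReal.ofReal r ^ t * scaledVolume d R O r U := by
        rw [← Finset.mul_sum]
        gcongr
        exact (hO i).sum_scaledVolume_preimage_le hd (hρ0 i) (hsim i)

theorem exists_forall_limsup_levelMeasure_ball_le {z : X} (hd : 0 ≤ d)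
    (hreg : ∃ C : ℝ≥0∞, C ≠ ∞ ∧ ∀ (x : X) (r : ℝ), 0 < r →
      μH[d] (ball x r) ≤ C * ENNReal.ofReal r ^ d)
    (hρ : ∀ i j, 0 < ρ i j ∧ ρ i j < 1)
    (hsim : ∀ i j x y, dist (S i j x) (S i j y) = ρ i j * dist x y)
    (hO : ∀ i, OpenSetCondition (S i) O) (hO0 : μH[d] O ≠ 0)
    (hKc : IsCompact K₀) (hK : ∀ i j, S i j '' K₀ ⊆ K₀) (hz : z ∈ K₀)
    (hp : ∀ i, ∑ j, ENNReal.ofReal (ρ i j ^ s i) = 1) (hts : ∀ i, t ≤ s i) :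
    ∃ C : ℝ≥0∞, C ≠ ∞ ∧ ∀ ω x, ∀ r ∈ Ioo 0 1,
      limsup (fun k => levelMeasure (fun i j => ENNReal.ofReal (ρ i j ^ s i)) S z ω k (ball x r))
        atTop ≤ C * ENNReal.ofReal r ^ t := by
  obtain ⟨C, hCtop, hC⟩ := hreg
  obtain ⟨a, ⟨ha0, ha1⟩, b, ⟨hb0, hb1⟩, hab⟩ :=
    exists_forall_mem_Icc_of_forall_mem_Ioo one_pos fun l : Σ i, Fin (m i) => hρ l.1 l.2
  obtain ⟨R, hR, c, hctop, hc⟩ := exists_one_le_mul_scaledVolume hd hO0 hKc.isBounded t a⁻¹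
  have hS : ∀ i j, Continuous (S i j) := fun i j =>
    (isClosedEmbedding_of_dist_eq_mul (hρ i j).1 (hsim i j)).continuous
  have hlarge : ∀ ω k U, ∀ r ∈ Icc 1 a⁻¹,
      levelMeasure (fun i j => ENNReal.ofReal (ρ i j ^ s i)) S z ω k U ≤
        c * ENNReal.ofReal r ^ t * scaledVolume d R O r U := fun ω k U r hr =>
    have := isProbabilityMeasure_levelMeasure (z := z) (fun i j => (hS i j).measurable) hp ω k
    measure_le_of_one_le_of_inter_nonempty (levelMeasure_compl_eq_zero hS hKc hK hz ω k)
      fun hU => hc U hU r hr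
  refine ⟨c * (C * ENNReal.ofReal (R + 1) ^ d), by finiteness, fun ω x r hr =>
    limsup_le_of_le (h := ?_)⟩
  filter_upwards [(tendsto_pow_atTop_nhds_zero_of_lt_one hb0.le hb1).eventually_le_const hr.1]
    with k hk
  have hra : r ≤ a⁻¹ := hr.2.le.trans (one_le_inv_iff₀.2 ⟨ha0, ha1.le⟩)
  calc levelMeasure _ S z ω k (ball x r)
    _ ≤ c * ENNReal.ofReal r ^ t * scaledVolume d R O r (ball x r) :=
      levelMeasure_le_mul_scaledVolume hd ha0 hb0 hb1.le (fun i j => hab ⟨i, j⟩) hsim hO hts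
        hlarge ω k measurableSet_ball ⟨hk, hra⟩
    _ ≤ c * ENNReal.ofReal r ^ t * (C * ENNReal.ofReal (R + 1) ^ d) := by
      gcongr
      exact scaledVolume_ball_le hd hR hC hr.1 x
    _ = c * (C * ENNReal.ofReal (R + 1) ^ d) * ENNReal.ofReal r ^ t := by ring

theorem hausdorffMeasure_smin_pos_general {smin : ℝ} (hd : 0 ≤ d)
    (hreg : ∃ C : ℝ≥0∞, C ≠ ∞ ∧ ∀ (x : X) (r : ℝ), 0 < r →
      μH[d] (ball x r) ≤ C * ENNReal.ofReal r ^ d)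
    (hρ : ∀ i j, 0 < ρ i j ∧ ρ i j < 1)
    (hsim : ∀ i j x y, dist (S i j x) (S i j y) = ρ i j * dist x y)
    (hO : ∀ i, OpenSetCondition (S i) O) (hO0 : μH[d] O ≠ 0)
    (hKc : IsCompact K₀) (hKne : K₀.Nonempty) (hK : ∀ i j, S i j '' K₀ ⊆ K₀)
    (hs : ∀ i, ∑ j, ρ i j ^ s i = 1) (hsmin : ∀ i, smin ≤ s i) :
    0 < (⨅ ω : ℕ → Fin N, μH[smin] (attractorOf m S K₀ ω)) ∧
      ∀ ω : ℕ → Fin N, ENNReal.ofReal smin ≤ dimH (attractorOf m S K₀ ω) := by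
  obtain ⟨z, hz⟩ := hKne
  have hp : ∀ i, ∑ j, ENNReal.ofReal (ρ i j ^ s i) = 1 := fun i => by
    rw [← ENNReal.ofReal_sum_of_nonneg fun j _ => Real.rpow_nonneg (hρ i j).1.le _, hs,
      ENNReal.ofReal_one]
  obtain ⟨C, hCtop, hC⟩ := exists_forall_limsup_levelMeasure_ball_le hd hreg hρ hsim hO hO0 hKc
    hK hz hp hsmin
  have hle : ∀ ω, C⁻¹ ≤ μH[smin] (attractorOf m S K₀ ω) := fun ω =>
    inv_le_hausdorffMeasure_attractorOf
      (fun i j => (isClosedEmbedding_of_dist_eq_mul (hρ i j).1 (hsim i j)).continuous)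
      hp hKc hK hz ω one_pos (hC ω)
  have hpos : 0 < C⁻¹ := ENNReal.inv_pos.2 hCtop
  exact ⟨hpos.trans_le (le_iInf hle), fun ω =>
    ofReal_le_dimH_of_hausdorffMeasure_ne_zero (hpos.trans_le (hle ω)).ne'⟩

end LowerBound

/-- For a RIFS of contracting similarities on `ℝⁿ` satisfying the uniform open set
condition, `inf_ω 𝓗^{s_min}(F_ω) > 0`; in particular `dim_H F_ω ≥ s_min` for all `ω`. -/
theorem hausdorffMeasure_smin_pos (n : ℕ) {N : ℕ} (hN : 0 < N)
    (m : Fin N → ℕ) (hm : ∀ i, 0 < m i)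
    (S : ∀ i, Fin (m i) → EuclideanSpace ℝ (Fin n) → EuclideanSpace ℝ (Fin n))
    (ρ : ∀ i, Fin (m i) → ℝ) (hρ : ∀ i j, 0 < ρ i j ∧ ρ i j < 1)
    (hsim : ∀ i j x y, dist (S i j x) (S i j y) = ρ i j * dist x y)
    (O : Set (EuclideanSpace ℝ (Fin n))) (hOne : O.Nonempty) (hOopen : IsOpen O)
    (hOsub : ∀ i j, S i j '' O ⊆ O)
    (hOdisj : ∀ i, Pairwise fun j j' : Fin (m i) => Disjoint (S i j '' O) (S i j' '' O))
    (K₀ : Set (EuclideanSpace ℝ (Fin n))) (hK₀c : IsCompact K₀) (hK₀ne : K₀.Nonempty)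
    (hK₀inv : ∀ i j, S i j '' K₀ ⊆ K₀)
    (s : Fin N → ℝ) (hs : ∀ i, ∑ j, ρ i j ^ s i = 1)
    (smin : ℝ) (hsmin : IsLeast (Set.range s) smin) :
    0 < (⨅ ω : ℕ → Fin N, μH[smin] (attractorOf m S K₀ ω)) ∧
      ∀ ω : ℕ → Fin N, ENNReal.ofReal smin ≤ dimH (attractorOf m S K₀ ω) := by
  have hOpos : μH[n] O ≠ 0 := by
    simpa using hOopen.measure_ne_zero μH[Module.finrank ℝ (EuclideanSpace ℝ (Fin n))] hOne
  exact hausdorffMeasure_smin_pos_general n.cast_nonneg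
    (by simpa using exists_hausdorffMeasure_finrank_ball_le (EuclideanSpace ℝ (Fin n))) hρ hsim
    (fun i => ⟨hOopen, hOsub i, hOdisj i⟩) hOpos hK₀c hK₀ne hK₀inv hs
    fun i => hsmin.2 (mem_range_self i)
end
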